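/- arXiv:2010.02028 — 3 statements merged into one kernel-verified Lean document; each statement's English description precedes it below -/
import Mathlib

section
/- Let V be the real vector space with basis consisting of elements J_{ab} for 0 ≤ a < b ≤ 3 (with the conventions J_{ba} := −J_{ab} and J_{aa} := 0) together with elements P_{cd} for all c,d ∈ {0,1,2,3}. Define a bilinear bracket on V by the relations [P_{ab}, P_{cd}] = 0, [J_{ab}, P_{cd}] = −η_{ac} P_{bd} + η_{bc} P_{ad}, [P_{cd}, J_{ab}] = −[J_{ab}, P_{cd}], and [J_{ab}, J_{cd}] = −η_{ac} J_{bd} + η_{bc} J_{ad} − η_{bd} J_{ac} + η_{ad} J_{bc}. Then this bracket is alternating and satisfies the Jacobi identity; that is, it makes V a real Lie algebra (the co-Poincaré algebra 𝔤_cP). -/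
open scoped BigOperators

/-- Minkowski metric diag(1,-1,-1,-1) on index set {0,1,2,3}. -/
noncomputable def eta (a b : Fin 4) : ℝ :=
  if a = b then (if a = 0 then 1 else -1) else 0

/-- Basis index set: J_{ab} for a < b, together with P_{cd} for all c,d. -/
abbrev CoPIdx : Type := ({x : Fin 4 × Fin 4 // x.1 < x.2}) ⊕ (Fin 4 × Fin 4)

/-- The underlying real vector space with the above basis. -/
abbrev CoPSpace : Type := CoPIdx → ℝ

/-- The generators J_{ab}, with the conventions J_{ba} = -J_{ab} and J_{aa} = 0. -/
noncomputable def Jgen (a b : Fin 4) : CoPSpace :=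
  if h : a < b then Pi.single (Sum.inl ⟨(a, b), h⟩) 1
  else if h' : b < a then -Pi.single (Sum.inl ⟨(b, a), h'⟩) 1
  else 0

/-- The generators P_{cd}. -/
noncomputable def Pgen (c d : Fin 4) : CoPSpace :=
  Pi.single (Sum.inr (c, d)) 1

/-- The bracket on basis elements, encoding the defining relations
[J_{ab}, P_{cd}] = -η_{ac} P_{bd} + η_{bc} P_{ad}, [P,P] = 0,
[P_{cd}, J_{ab}] = -[J_{ab}, P_{cd}], and
[J_{ab}, J_{cd}] = -η_{ac} J_{bd} + η_{bc} J_{ad} - η_{bd} J_{ac} + η_{ad} J_{bc}. -/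
noncomputable def brBasis : CoPIdx → CoPIdx → CoPSpace
  | Sum.inl ⟨(a, b), _⟩, Sum.inl ⟨(c, d), _⟩ =>
      -(eta a c) • Jgen b d + (eta b c) • Jgen a d
        - (eta b d) • Jgen a c + (eta a d) • Jgen b c
  | Sum.inl ⟨(a, b), _⟩, Sum.inr (c, d) =>
      -(eta a c) • Pgen b d + (eta b c) • Pgen a d
  | Sum.inr (c, d), Sum.inl ⟨(a, b), _⟩ =>
      -(-(eta a c) • Pgen b d + (eta b c) • Pgen a d)
  | Sum.inr _, Sum.inr _ => 0

/-- The bilinear extension of the basis bracket to all of the space. -/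
noncomputable def brkt (x y : CoPSpace) : CoPSpace :=
  ∑ i : CoPIdx, ∑ j : CoPIdx, (x i * y j) • brBasis i j

/-!
The algebra has a faithful matrix representation: `J_{ab}` acts on `ℝ⁴` as the infinitesimal
`η`-rotation `(E_{ab} - E_{ba}) η`, and `P_{cd}` is the matrix unit `E_{cd}`, on which rotations
act by left multiplication. Putting the two into the first row of block matrices
`[[A, M], [0, 0]]` turns the bracket into the commutator, and the images of the basis vectors are
linearly independent. Hence the alternating law and the Jacobi identity are inherited from the
commutator, and the relations among the generators may be checked on matrices.
-/

section StructureConstants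

variable {R ι L : Type*} [CommRing R] [Fintype ι] [LieRing L] [LieAlgebra R L]

/-- The bilinear bracket on `ι → R` whose value on the `i`-th and `j`-th standard basis vectors is
`c i j`. -/
def structureBracket (c : ι → ι → ι → R) : (ι → R) →ₗ[R] (ι → R) →ₗ[R] (ι → R) :=
  Fintype.linearCombination R fun i => Fintype.linearCombination R (c i)

theorem structureBracket_apply (c : ι → ι → ι → R) (x y : ι → R) :
    structureBracket c x y = ∑ i, ∑ j, (x i * y j) • c i j := by
  simp only [structureBracket, Fintype.linearCombination_apply, LinearMap.sum_apply,
    LinearMap.smul_apply, Finset.smul_sum, mul_smul]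

variable {c : ι → ι → ι → R} {ρ : ι → L}

theorem linearCombination_structureBracket
    (hc : ∀ i j, Fintype.linearCombination R ρ (c i j) = ⁅ρ i, ρ j⁆) (x y : ι → R) :
    Fintype.linearCombination R ρ (structureBracket c x y) =
      ⁅Fintype.linearCombination R ρ x, Fintype.linearCombination R ρ y⁆ := by
  simp only [structureBracket_apply, map_sum, map_smul, hc]
  simp only [Fintype.linearCombination_apply, sum_lie_sum, smul_lie, lie_smul, smul_smul, mul_comm]

theorem structureBracket_isAlt (hρ : LinearIndependent R ρ)
    (hc : ∀ i j, Fintype.linearCombination R ρ (c i j) = ⁅ρ i, ρ j⁆) :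
    (structureBracket c).IsAlt := fun x =>
  hρ.fintypeLinearCombination_injective <| by
    rw [linearCombination_structureBracket hc, lie_self, map_zero]

theorem structureBracket_jacobi (hρ : LinearIndependent R ρ)
    (hc : ∀ i j, Fintype.linearCombination R ρ (c i j) = ⁅ρ i, ρ j⁆) (x y z : ι → R) :
    structureBracket c x (structureBracket c y z) + structureBracket c y (structureBracket c z x) +
      structureBracket c z (structureBracket c x y) = 0 :=
  hρ.fintypeLinearCombination_injective <| by
    simp only [map_add, linearCombination_structureBracket hc, lie_jacobi, map_zero]

end StructureConstants

attribute [local instance] LieRing.ofAssociativeRing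

section BlockMatrices

open Matrix

variable {R n m : Type*} [CommRing R]

/-- The linear embedding `(A, M) ↦ [[A, M], [0, 0]]`. Its image is closed under commutators and
realizes the semidirect product of `𝔤𝔩(n)` with the abelian Lie algebra of `n × m` matrices. -/
def firstRowBlocks : Matrix n n R × Matrix n m R →ₗ[R] Matrix (n ⊕ m) (n ⊕ m) R where
  toFun p := fromBlocks p.1 p.2 0 0
  map_add' p q := by simp [fromBlocks_add]
  map_smul' r p := by simp [fromBlocks_smul]

theorem firstRowBlocks_injective :
    Function.Injective (firstRowBlocks : Matrix n n R × Matrix n m R →ₗ[R] _) := fun _ _ h =>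
  let ⟨hA, hM, _⟩ := fromBlocks_inj.mp h
  Prod.ext hA hM

theorem firstRowBlocks_mul [Fintype n] [Fintype m] (p q : Matrix n n R × Matrix n m R) :
    firstRowBlocks p * firstRowBlocks q = firstRowBlocks (p.1 * q.1, p.1 * q.2) := by
  simp [firstRowBlocks, fromBlocks_multiply]

theorem lie_firstRowBlocks [Fintype n] [Fintype m] (p q : Matrix n n R × Matrix n m R) :
    ⁅firstRowBlocks p, firstRowBlocks q⁆ =
      firstRowBlocks (⁅p.1, q.1⁆, p.1 * q.2 - q.1 * p.2) := by
  simp only [Ring.lie_def, firstRowBlocks_mul, ← map_sub, Prod.mk_sub_mk]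

end BlockMatrices

section InfinitesimalRotations

open Matrix

variable {R n m : Type*} [CommRing R] [DecidableEq n]

theorem linearIndependent_single_sub_single [Preorder n] :
    LinearIndependent R fun p : {x : n × n // x.1 < x.2} =>
      single p.1.1 p.1.2 (1 : R) - single p.1.2 p.1.1 1 := by
  let upperEntries : Matrix n n R →ₗ[R] {x : n × n // x.1 < x.2} → R :=
    LinearMap.pi fun p => entryLinearMap R R p.1.1 p.1.2
  refine .of_comp upperEntries ?_
  convert Pi.linearIndependent_single_one {x : n × n // x.1 < x.2} R with p
  ext q
  have hqp : ¬(p.1.2 = q.1.1 ∧ p.1.1 = q.1.2) := fun ⟨h₁, h₂⟩ =>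
    lt_asymm p.2 (h₁ ▸ h₂ ▸ q.2)
  simp [upperEntries, single_apply, hqp, Pi.single_apply, Subtype.ext_iff, Prod.ext_iff,
    eq_comm (a := q.1.1), eq_comm (a := q.1.2)]

variable [Fintype n]

/-- The infinitesimal rotation `(E_{ab} - E_{ba}) g` in the `ab`-plane of the bilinear form with
Gram matrix `g`. It sends `e_c` to `g_{bc} e_a - g_{ac} e_b`. -/
def infinitesimalRotation (g : Matrix n n R) (a b : n) : Matrix n n R :=
  (single a b 1 - single b a 1) * g

variable (g : Matrix n n R)

theorem infinitesimalRotation_self (a : n) : infinitesimalRotation g a a = 0 := by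
  simp [infinitesimalRotation]

theorem neg_infinitesimalRotation (a b : n) :
    -infinitesimalRotation g a b = infinitesimalRotation g b a := by
  rw [infinitesimalRotation, ← neg_mul, neg_sub, infinitesimalRotation]

theorem infinitesimalRotation_mul_single [DecidableEq m] (a b c : n) (d : m) :
    infinitesimalRotation g a b * single c d (1 : R) =
      -(g a c) • single b d 1 + g b c • single a d 1 := by
  simp only [infinitesimalRotation, Matrix.sub_mul, single_mul_mul_single, neg_smul, smul_single,
    one_mul, mul_one, smul_eq_mul, neg_add_eq_sub]

variable {g}

theorem lie_infinitesimalRotation (hg : g.IsSymm) (a b c d : n) :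
    ⁅infinitesimalRotation g a b, infinitesimalRotation g c d⁆ =
      -(g a c) • infinitesimalRotation g b d + g b c • infinitesimalRotation g a d
        - g b d • infinitesimalRotation g a c + g a d • infinitesimalRotation g b c := by
  have mul_eq (a b c d : n) : infinitesimalRotation g a b * infinitesimalRotation g c d =
      (-(g a c) • single b d 1 + g b c • single a d 1
        - (-(g a d) • single b c 1 + g b d • single a c 1)) * g := by
    rw [infinitesimalRotation.eq_def g c d, ← Matrix.mul_assoc, mul_sub,
      infinitesimalRotation_mul_single, infinitesimalRotation_mul_single]
  rw [Ring.lie_def, mul_eq, mul_eq, hg.apply a c, hg.apply b c, hg.apply a d, hg.apply b d]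
  simp only [infinitesimalRotation, ← smul_mul_assoc, ← sub_mul, ← add_mul]
  congr 1
  module

theorem linearIndependent_infinitesimalRotation [Preorder n] (hg : IsUnit g) :
    LinearIndependent R fun p : {x : n × n // x.1 < x.2} =>
      infinitesimalRotation g p.1.1 p.1.2 :=
  linearIndependent_single_sub_single.map_injOn (LinearMap.mulRight R g)
    hg.isRegular.right.injOn

variable (g) (m) in
/-- The generators of the semidirect product of the rotations of `g` with the `n × m` matrices:
the rotations in the `ab`-planes with `a < b`, and the matrix units. -/
def semidirectGenerator [LT n] [DecidableEq m] :
    {x : n × n // x.1 < x.2} ⊕ (n × m) → Matrix (n ⊕ m) (n ⊕ m) R :=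
  Sum.elim (fun p => firstRowBlocks (infinitesimalRotation g p.1.1 p.1.2, 0))
    (fun p => firstRowBlocks (0, single p.1 p.2 1))

theorem linearIndependent_semidirectGenerator [Preorder n] [Finite m] [DecidableEq m]
    (hg : IsUnit g) : LinearIndependent R (semidirectGenerator m g) := by
  have hsingle : LinearIndependent R fun p : n × m => single p.1 p.2 (1 : R) := by
    simpa only [← stdBasis_eq_single] using (stdBasis R n m).linearIndependent
  have hpair :=
    linearIndependent_inl_union_inr' (linearIndependent_infinitesimalRotation hg) hsingle
  convert hpair.map_injOn firstRowBlocks firstRowBlocks_injective.injOn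
  ext1 (p | p) <;> rfl

end InfinitesimalRotations

section CoPoincare

open Matrix

/-- The Minkowski metric `eta` as a matrix, the Gram matrix of the rotations `J_{ab}`. -/
noncomputable def minkowskiMatrix : Matrix (Fin 4) (Fin 4) ℝ := of eta

theorem minkowskiMatrix_eq_diagonal :
    minkowskiMatrix = diagonal fun a => if a = 0 then 1 else -1 := rfl

theorem minkowskiMatrix_isSymm : minkowskiMatrix.IsSymm :=
  isSymm_diagonal _

theorem isUnit_minkowskiMatrix : IsUnit minkowskiMatrix := by
  rw [minkowskiMatrix_eq_diagonal, isUnit_diagonal, Pi.isUnit_iff]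
  intro a
  split <;> simp

/-- The faithful representation of the co-Poincaré algebra by `8 × 8` matrices. -/
noncomputable def coPoincareRep : CoPSpace →ₗ[ℝ] Matrix (Fin 4 ⊕ Fin 4) (Fin 4 ⊕ Fin 4) ℝ :=
  Fintype.linearCombination ℝ (semidirectGenerator (Fin 4) minkowskiMatrix)

theorem coPoincareRep_injective : Function.Injective coPoincareRep :=
  (linearIndependent_semidirectGenerator
    isUnit_minkowskiMatrix).fintypeLinearCombination_injective

theorem coPoincareRep_single (i : CoPIdx) :
    coPoincareRep (Pi.single i 1) = semidirectGenerator (Fin 4) minkowskiMatrix i := by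
  rw [coPoincareRep, Fintype.linearCombination_apply_single, one_smul]

theorem coPoincareRep_Pgen (c d : Fin 4) :
    coPoincareRep (Pgen c d) = firstRowBlocks (0, single c d 1) :=
  coPoincareRep_single _

theorem coPoincareRep_Jgen (a b : Fin 4) :
    coPoincareRep (Jgen a b) = firstRowBlocks (infinitesimalRotation minkowskiMatrix a b, 0) := by
  rcases lt_trichotomy a b with hab | rfl | hba
  · rw [Jgen, dif_pos hab, coPoincareRep_single]
    rfl
  · rw [Jgen, dif_neg (lt_irrefl a), dif_neg (lt_irrefl a), infinitesimalRotation_self, map_zero,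
      Prod.mk_zero_zero, map_zero]
  · rw [Jgen, dif_neg hba.not_gt, dif_pos hba, map_neg, coPoincareRep_single,
      ← neg_infinitesimalRotation]
    simp [semidirectGenerator, ← map_neg]

theorem lie_coPoincareRep_Pgen_Pgen (a b c d : Fin 4) :
    ⁅coPoincareRep (Pgen a b), coPoincareRep (Pgen c d)⁆ = 0 := by
  simp only [coPoincareRep_Pgen, lie_firstRowBlocks, lie_zero, Matrix.zero_mul, sub_self,
    Prod.mk_zero_zero, map_zero]

theorem lie_coPoincareRep_Jgen_Pgen (a b c d : Fin 4) :
    ⁅coPoincareRep (Jgen a b), coPoincareRep (Pgen c d)⁆ =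
      coPoincareRep (-(eta a c) • Pgen b d + eta b c • Pgen a d) := by
  simp only [map_add, map_smul, coPoincareRep_Jgen, coPoincareRep_Pgen, lie_firstRowBlocks,
    infinitesimalRotation_mul_single]
  simp [← map_smul, ← map_add, minkowskiMatrix]

theorem lie_coPoincareRep_Jgen_Jgen (a b c d : Fin 4) :
    ⁅coPoincareRep (Jgen a b), coPoincareRep (Jgen c d)⁆ =
      coPoincareRep (-(eta a c) • Jgen b d + eta b c • Jgen a d
        - eta b d • Jgen a c + eta a d • Jgen b c) := by
  simp only [map_add, map_sub, map_smul, coPoincareRep_Jgen, lie_firstRowBlocks,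
    lie_infinitesimalRotation minkowskiMatrix_isSymm]
  simp [← map_smul, ← map_add, ← map_sub, minkowskiMatrix]

theorem coPoincareRep_brBasis (i j : CoPIdx) :
    coPoincareRep (brBasis i j) =
      ⁅semidirectGenerator (Fin 4) minkowskiMatrix i,
        semidirectGenerator (Fin 4) minkowskiMatrix j⁆ := by
  have generator_inl (p : {x : Fin 4 × Fin 4 // x.1 < x.2}) :
      semidirectGenerator (Fin 4) minkowskiMatrix (.inl p) =
        coPoincareRep (Jgen p.1.1 p.1.2) := (coPoincareRep_Jgen _ _).symm
  have generator_inr (p : Fin 4 × Fin 4) :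
      semidirectGenerator (Fin 4) minkowskiMatrix (.inr p) =
        coPoincareRep (Pgen p.1 p.2) := (coPoincareRep_Pgen _ _).symm
  rcases i with p | p <;> rcases j with q | q <;> simp only [generator_inl, generator_inr]
  · exact (lie_coPoincareRep_Jgen_Jgen ..).symm
  · exact (lie_coPoincareRep_Jgen_Pgen ..).symm
  · rw [← lie_skew, lie_coPoincareRep_Jgen_Pgen, ← map_neg]
    rfl
  · rw [lie_coPoincareRep_Pgen_Pgen]
    exact map_zero _

theorem brkt_eq_structureBracket (x y : CoPSpace) : brkt x y = structureBracket brBasis x y :=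
  (structureBracket_apply brBasis x y).symm

theorem coPoincareRep_brkt (x y : CoPSpace) :
    coPoincareRep (brkt x y) = ⁅coPoincareRep x, coPoincareRep y⁆ := by
  rw [brkt_eq_structureBracket]
  exact linearCombination_structureBracket coPoincareRep_brBasis x y

theorem brkt_eq_of_lie_coPoincareRep_eq {x y z : CoPSpace}
    (h : ⁅coPoincareRep x, coPoincareRep y⁆ = coPoincareRep z) : brkt x y = z :=
  coPoincareRep_injective ((coPoincareRep_brkt x y).trans h)

end CoPoincare

/-- the bracket defined by the co-Poincaré relations is bilinear,
satisfies the defining relations on the generators, is alternating, and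
satisfies the Jacobi identity; that is, it makes the space a real Lie
algebra (the co-Poincaré algebra 𝔤_cP). -/
theorem coPoincare_isLieAlgebra :
    (∀ (r : ℝ) (x y z : CoPSpace), brkt (r • x + y) z = r • brkt x z + brkt y z) ∧
    (∀ (r : ℝ) (x y z : CoPSpace), brkt x (r • y + z) = r • brkt x y + brkt x z) ∧
    (∀ a b c d : Fin 4, brkt (Pgen a b) (Pgen c d) = 0) ∧
    (∀ a b c d : Fin 4, brkt (Jgen a b) (Pgen c d)
        = -(eta a c) • Pgen b d + (eta b c) • Pgen a d) ∧
    (∀ a b c d : Fin 4, brkt (Pgen c d) (Jgen a b) = -brkt (Jgen a b) (Pgen c d)) ∧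
    (∀ a b c d : Fin 4, brkt (Jgen a b) (Jgen c d)
        = -(eta a c) • Jgen b d + (eta b c) • Jgen a d
          - (eta b d) • Jgen a c + (eta a d) • Jgen b c) ∧
    (∀ x : CoPSpace, brkt x x = 0) ∧
    (∀ x y z : CoPSpace, brkt x (brkt y z) + brkt y (brkt z x) + brkt z (brkt x y) = 0) := by
  have hρ := linearIndependent_semidirectGenerator (m := Fin 4) isUnit_minkowskiMatrix
  have hc := coPoincareRep_brBasis
  have halt := structureBracket_isAlt hρ hc
  refine ⟨fun r x y z => ?_, fun r x y z => ?_, fun a b c d => ?_, fun a b c d => ?_,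
    fun a b c d => ?_, fun a b c d => ?_, fun x => ?_, fun x y z => ?_⟩
  · simp only [brkt_eq_structureBracket, map_add, map_smul, LinearMap.add_apply,
      LinearMap.smul_apply]
  · simp only [brkt_eq_structureBracket, map_add, map_smul]
  · exact brkt_eq_of_lie_coPoincareRep_eq
      ((lie_coPoincareRep_Pgen_Pgen a b c d).trans (map_zero _).symm)
  · exact brkt_eq_of_lie_coPoincareRep_eq (lie_coPoincareRep_Jgen_Pgen a b c d)
  · rw [brkt_eq_structureBracket, brkt_eq_structureBracket, halt.neg]
  · exact brkt_eq_of_lie_coPoincareRep_eq (lie_coPoincareRep_Jgen_Jgen a b c d)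
  · rw [brkt_eq_structureBracket, halt.self_eq_zero]
  · simp only [brkt_eq_structureBracket, structureBracket_jacobi hρ hc]
end

section
/- The Schwarzschild vierbein and spin connection satisfy the torsionless condition: T^a_{μν} = 0 on U for all a, μ, ν ∈ {0,1,2,3}. -/
open scoped BigOperators

/-- Levi-Civita symbol ε_{abcd} on {0,1,2,3}. -/
noncomputable def eps (a b c d : Fin 4) : ℝ :=
  ∑ σ : Equiv.Perm (Fin 4),
    if ![a, b, c, d] = ⇑σ then ((Equiv.Perm.sign σ : ℤ) : ℝ) else 0

/-- Partial derivative in the μ-th coordinate direction of ℝ⁴. -/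
noncomputable def pd (μ : Fin 4) (F : (Fin 4 → ℝ) → ℝ) (x : Fin 4 → ℝ) : ℝ :=
  fderiv ℝ F x (Pi.single μ 1)

/-- f(r) = √(1 − 2Gm/r); the coordinates are x = (t,r,θ,φ). -/
noncomputable def fS (G m : ℝ) (x : Fin 4 → ℝ) : ℝ :=
  Real.sqrt (1 - 2 * G * m / x 1)

/-- The Schwarzschild chart U = {r > 2Gm, r > 0, 0 < θ < π}. -/
def Uchart (G m : ℝ) : Set (Fin 4 → ℝ) :=
  {x | 2 * G * m < x 1 ∧ 0 < x 1 ∧ 0 < x 2 ∧ x 2 < Real.pi}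

/-- The Schwarzschild vierbein E^a_μ: E⁰_t = f, E¹_r = 1/f, E²_θ = r,
E³_φ = r sin θ, all other components zero. -/
noncomputable def Evb (G m : ℝ) (x : Fin 4 → ℝ) : Fin 4 → Fin 4 → ℝ :=
  ![![fS G m x, 0, 0, 0],
    ![0, (fS G m x)⁻¹, 0, 0],
    ![0, 0, x 1, 0],
    ![0, 0, 0, x 1 * Real.sin (x 2)]]

/-- The Schwarzschild spin connection ω_μ^{ab}, antisymmetric in (a,b), with
nonzero components ω_t^{01} = −Gm/r², ω_θ^{12} = f, ω_φ^{13} = f sin θ,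
ω_φ^{23} = cos θ (indexed as `sw G m x μ a b`). -/
noncomputable def sw (G m : ℝ) (x : Fin 4 → ℝ) : Fin 4 → Fin 4 → Fin 4 → ℝ :=
  ![![![0, -(G * m) / (x 1) ^ 2, 0, 0],
     ![(G * m) / (x 1) ^ 2, 0, 0, 0],
     ![0, 0, 0, 0],
     ![0, 0, 0, 0]],
    ![![0, 0, 0, 0], ![0, 0, 0, 0], ![0, 0, 0, 0], ![0, 0, 0, 0]],
    ![![0, 0, 0, 0],
     ![0, 0, fS G m x, 0],
     ![0, -fS G m x, 0, 0],
     ![0, 0, 0, 0]],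
    ![![0, 0, 0, 0],
     ![0, 0, 0, fS G m x * Real.sin (x 2)],
     ![0, 0, 0, Real.cos (x 2)],
     ![0, -(fS G m x * Real.sin (x 2)), -Real.cos (x 2), 0]]]

/-- The index-lowered spin connection ω_μ^a{}_c = Σ_b ω_μ^{ab} η_{bc}. -/
noncomputable def swl (G m : ℝ) (x : Fin 4 → ℝ) (μ a c : Fin 4) : ℝ :=
  ∑ b : Fin 4, sw G m x μ a b * eta b c

/-- Torsion components T^a_{μν} of the Schwarzschild data. -/
noncomputable def Tor (G m : ℝ) (x : Fin 4 → ℝ) (a μ ν : Fin 4) : ℝ :=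
  pd μ (fun y => Evb G m y a ν) x - pd ν (fun y => Evb G m y a μ) x
    + ∑ c : Fin 4, (swl G m x μ a c * Evb G m x c ν - swl G m x ν a c * Evb G m x c μ)

/-- Curvature components R^{ab}_{μν} of the Schwarzschild spin connection. -/
noncomputable def Rcurv (G m : ℝ) (x : Fin 4 → ℝ) (a b μ ν : Fin 4) : ℝ :=
  pd μ (fun y => sw G m y ν a b) x - pd ν (fun y => sw G m y μ a b) x
    + ∑ c : Fin 4, (swl G m x μ a c * sw G m x ν c b - swl G m x ν a c * sw G m x μ c b)

/-!
For a diagonal vierbein `E^a_μ = e_a δ^a_μ`, the torsion vanishes as soon as `ω_μ^a_c = 0` unless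
`μ ∈ {a, c}` and `∂_μ e_ν = ω_ν^ν_μ e_μ` for all `μ ≠ ν`. The Schwarzschild connection has the
required zeros, and the only nontrivial equations among the latter are `∂_r f = (Gm/r²) f⁻¹`,
`∂_r r = f f⁻¹`, `∂_r (r sin θ) = f sin θ f⁻¹` and `∂_θ (r sin θ) = cos θ r`.
-/

theorem pd_comp_coord {g : ℝ → ℝ} {g' : ℝ} {x : Fin 4 → ℝ} {i : Fin 4}
    (hg : HasDerivAt g g' (x i)) (μ : Fin 4) :
    pd μ (fun y => g (y i)) x = if μ = i then g' else 0 := by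
  have h_coord : HasFDerivAt (fun y : Fin 4 → ℝ => y i)
      (ContinuousLinearMap.proj i : (Fin 4 → ℝ) →L[ℝ] ℝ) x := hasFDerivAt_apply i x
  have h : HasFDerivAt (fun y : Fin 4 → ℝ => g (y i))
      (g' • (ContinuousLinearMap.proj i : (Fin 4 → ℝ) →L[ℝ] ℝ)) x :=
    HasDerivAt.comp_hasFDerivAt (f := fun y : Fin 4 → ℝ => y i) x hg h_coord
  simp [pd, h.fderiv, Pi.single_apply, eq_comm]

theorem pd_mul {F H : (Fin 4 → ℝ) → ℝ} {x : Fin 4 → ℝ} (hF : DifferentiableAt ℝ F x)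
    (hH : DifferentiableAt ℝ H x) (μ : Fin 4) :
    pd μ (fun y => F y * H y) x = F x * pd μ H x + H x * pd μ F x := by
  simp [pd, fderiv_fun_mul hF hH]

theorem hasDerivAt_sqrt_one_sub_div {c r : ℝ} (hr : r ≠ 0) (hc : 1 - c / r ≠ 0) :
    HasDerivAt (fun s => √(1 - c / s)) (c / r ^ 2 / (2 * √(1 - c / r))) r := by
  have h_inner : HasDerivAt (fun s => 1 - c / s) (c / r ^ 2) r := by
    simpa [div_eq_mul_inv] using ((hasDerivAt_inv hr).const_mul c).const_sub 1
  exact h_inner.sqrt hc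

/-- Torsion `T^a_{μν}` at `x` of a vierbein field `E` and a spin connection. The connection enters
only through its value `ω μ a c = ω_μ^a_c` at `x`, with the last index already lowered. -/
noncomputable def vierbeinTorsion (E : (Fin 4 → ℝ) → Matrix (Fin 4) (Fin 4) ℝ)
    (ω : Fin 4 → Fin 4 → Fin 4 → ℝ) (x : Fin 4 → ℝ) (a μ ν : Fin 4) : ℝ :=
  pd μ (fun y => E y a ν) x - pd ν (fun y => E y a μ) x
    + ∑ c, (ω μ a c * E x c ν - ω ν a c * E x c μ)

theorem pd_diagonal (e : (Fin 4 → ℝ) → Fin 4 → ℝ) (x : Fin 4 → ℝ) (μ a ν : Fin 4) :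
    pd μ (fun y => Matrix.diagonal (e y) a ν) x =
      if a = ν then pd μ (fun y => e y ν) x else 0 := by
  obtain rfl | h := eq_or_ne a ν
  · simp
  · simp [h, pd]

theorem vierbeinTorsion_diagonal (e : (Fin 4 → ℝ) → Fin 4 → ℝ) (ω : Fin 4 → Fin 4 → Fin 4 → ℝ)
    (x : Fin 4 → ℝ) (a μ ν : Fin 4) :
    vierbeinTorsion (fun y => Matrix.diagonal (e y)) ω x a μ ν =
      (if a = ν then pd μ (fun y => e y ν) x else 0)
        - (if a = μ then pd ν (fun y => e y μ) x else 0)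
        + (ω μ a ν * e x ν - ω ν a μ * e x μ) := by
  simp only [vierbeinTorsion, pd_diagonal]
  simp [Matrix.diagonal_apply, Finset.sum_sub_distrib]

theorem vierbeinTorsion_diagonal_eq_zero {e : (Fin 4 → ℝ) → Fin 4 → ℝ}
    {ω : Fin 4 → Fin 4 → Fin 4 → ℝ} {x : Fin 4 → ℝ}
    (hω : ∀ μ a c, a ≠ μ → c ≠ μ → ω μ a c = 0)
    (he : ∀ μ ν, μ ≠ ν → pd μ (fun y => e y ν) x = ω ν ν μ * e x μ) (a μ ν : Fin 4) :
    vierbeinTorsion (fun y => Matrix.diagonal (e y)) ω x a μ ν = 0 := by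
  rw [vierbeinTorsion_diagonal]
  obtain rfl | hμν := eq_or_ne μ ν
  · simp
  obtain rfl | haν := eq_or_ne a ν
  · simp [hμν.symm, he μ a hμν, hω μ a a hμν.symm hμν.symm]
  obtain rfl | haμ := eq_or_ne a μ
  · simp [hμν, he ν a hμν.symm, hω ν a a hμν hμν]
  · simp [haν, haμ, hω μ a ν haμ hμν.symm, hω ν a μ haν hμν]

theorem swl_eq_sw_mul_eta (G m : ℝ) (x : Fin 4 → ℝ) (μ a c : Fin 4) :
    swl G m x μ a c = sw G m x μ a c * eta c c := by
  simp [swl, eta]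

theorem swl_eq_zero_of_ne (G m : ℝ) (x : Fin 4 → ℝ) (μ a c : Fin 4) (ha : a ≠ μ) (hc : c ≠ μ) :
    swl G m x μ a c = 0 := by
  rw [swl_eq_sw_mul_eta]
  fin_cases μ <;> fin_cases a <;> fin_cases c <;> simp [sw] at ha hc ⊢

/-- The diagonal entries `(f, 1/f, r, r sin θ)` of the Schwarzschild vierbein. -/
noncomputable def schwarzschildScale (G m : ℝ) (x : Fin 4 → ℝ) : Fin 4 → ℝ :=
  ![fS G m x, (fS G m x)⁻¹, x 1, x 1 * Real.sin (x 2)]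

theorem Evb_eq_diagonal (G m : ℝ) (x : Fin 4 → ℝ) :
    Evb G m x = Matrix.diagonal (schwarzschildScale G m x) := by
  ext a μ
  fin_cases a <;> fin_cases μ <;> simp [Evb, schwarzschildScale]

theorem Tor_eq_vierbeinTorsion_diagonal (G m : ℝ) (x : Fin 4 → ℝ) (a μ ν : Fin 4) :
    Tor G m x a μ ν =
      vierbeinTorsion (fun y => Matrix.diagonal (schwarzschildScale G m y)) (swl G m x)
        x a μ ν := by
  simp only [Tor, vierbeinTorsion, Evb_eq_diagonal]

section Derivatives

variable {G m : ℝ} {x : Fin 4 → ℝ}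

theorem hasDerivAt_fS_radial (hr : x 1 ≠ 0) (hf : 0 < 1 - 2 * G * m / x 1) :
    HasDerivAt (fun r => √(1 - 2 * G * m / r)) (G * m / x 1 ^ 2 / fS G m x) (x 1) := by
  convert hasDerivAt_sqrt_one_sub_div hr hf.ne' using 1
  rw [fS]
  ring

theorem pd_fS (hr : x 1 ≠ 0) (hf : 0 < 1 - 2 * G * m / x 1) (μ : Fin 4) :
    pd μ (fun y => fS G m y) x = if μ = 1 then G * m / x 1 ^ 2 / fS G m x else 0 :=
  pd_comp_coord (hasDerivAt_fS_radial hr hf) μ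

theorem pd_inv_fS_of_ne (hr : x 1 ≠ 0) (hf : 0 < 1 - 2 * G * m / x 1) {μ : Fin 4} (hμ : μ ≠ 1) :
    pd μ (fun y => (fS G m y)⁻¹) x = 0 :=
  (pd_comp_coord ((hasDerivAt_fS_radial hr hf).fun_inv (Real.sqrt_pos.2 hf).ne') μ).trans
    (if_neg hμ)

theorem pd_coord (x : Fin 4 → ℝ) (i μ : Fin 4) :
    pd μ (fun y => y i) x = if μ = i then 1 else 0 :=
  pd_comp_coord (hasDerivAt_id (x i)) μ

theorem pd_r_mul_sin (x : Fin 4 → ℝ) (μ : Fin 4) :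
    pd μ (fun y => y 1 * Real.sin (y 2)) x =
      x 1 * (if μ = 2 then Real.cos (x 2) else 0) + Real.sin (x 2) * (if μ = 1 then 1 else 0) := by
  rw [pd_mul (by fun_prop) (by fun_prop), pd_coord, pd_comp_coord (Real.hasDerivAt_sin (x 2))]

theorem pd_schwarzschildScale (hr : x 1 ≠ 0) (hf : 0 < 1 - 2 * G * m / x 1) {μ ν : Fin 4}
    (hμν : μ ≠ ν) :
    pd μ (fun y => schwarzschildScale G m y ν) x
      = swl G m x ν ν μ * schwarzschildScale G m x μ := by
  have hf₀ : fS G m x ≠ 0 := (Real.sqrt_pos.2 hf).ne'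
  rw [swl_eq_sw_mul_eta]
  fin_cases ν
  · change pd μ (fun y => fS G m y) x = _
    rw [pd_fS hr hf]
    fin_cases μ <;> simp [sw, eta, schwarzschildScale, div_eq_mul_inv] at hμν ⊢
  · change pd μ (fun y => (fS G m y)⁻¹) x = _
    rw [pd_inv_fS_of_ne hr hf hμν]
    fin_cases μ <;> simp [sw] at hμν ⊢
  · change pd μ (fun y => y 1) x = _
    rw [pd_coord]
    fin_cases μ <;> simp [sw, eta, schwarzschildScale, hf₀] at hμν ⊢
  · change pd μ (fun y => y 1 * Real.sin (y 2)) x = _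
    rw [pd_r_mul_sin]
    fin_cases μ <;> simp [sw, eta, schwarzschildScale, hf₀, mul_comm] at hμν ⊢

end Derivatives

theorem schwarzschild_torsionless_general (G m : ℝ) (x : Fin 4 → ℝ) (hr : x 1 ≠ 0)
    (hf : 0 < 1 - 2 * G * m / x 1) (a μ ν : Fin 4) :
    Tor G m x a μ ν = 0 := by
  rw [Tor_eq_vierbeinTorsion_diagonal]
  exact vierbeinTorsion_diagonal_eq_zero (swl_eq_zero_of_ne G m x)
    (fun _ _ => pd_schwarzschildScale hr hf) a μ ν

/-- the Schwarzschild vierbein and spin connection satisfy the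
torsionless condition T^a_{μν} = 0 on U. -/
theorem schwarzschild_torsionless (G m : ℝ) (hG : 0 < G) (hm : 0 ≤ m)
    (x : Fin 4 → ℝ) (hx : x ∈ Uchart G m) (a μ ν : Fin 4) :
    Tor G m x a μ ν = 0 := by
  have hf : 0 < 1 - 2 * G * m / x 1 := sub_pos.2 ((div_lt_one hx.2.1).2 hx.1)
  exact schwarzschild_torsionless_general G m x hx.2.1.ne' hf a μ ν
end

section
/- For the Schwarzschild data, the Hamiltonian four-form −(1/2) Σ_{a,b,c} ω^{a}{}_{c} ∧ ω^{cb} ∧ S_{ab} equals −sin θ · dt ∧ dr ∧ dθ ∧ dφ on U. Explicitly, at every point of U, −(1/4) Σ_{τ ∈ S₄} sgn(τ) Σ_{a,b,c,d,e} ω_{τ(0)}^{a}{}_{c} · ω_{τ(1)}^{cb} · ε_{abde} · E^d_{τ(2)} · E^e_{τ(3)} = −sin θ, where S₄ is the group of permutations of the coordinate indices {0,1,2,3} = (t,r,θ,φ). -/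
open scoped BigOperators

/-!
For a diagonal vierbein, contracting `ε_{abde} E^d_{τ 2} E^e_{τ 3}` forces `{a, b} = {τ 0, τ 1}`,
and the sign of `ε` cancels `sgn τ`. A torsion-free connection of such a vierbein has
`ω_μ^{ab} ≠ 0` only when `μ ∈ {a, b}`, so what remains is the sum of
`η_cc ω_μ^{μc} ω_ν^{νc} E^ρ_ρ E^σ_σ` over `c` and the pairs `μ < ν` with complement `ρ < σ`.
For the Schwarzschild data only the pairs `tθ`, `tφ`, `θφ` contribute, giving
`-(Gm/r + Gm/r + f²) sin θ`, and `f² = 1 - 2Gm/r`.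
-/

/-- The product `ω_μ^a{}_c ω_ν^{cb}` of two connection components, summed over `c`; its
antisymmetrization in `μ, ν` is the coefficient of the two-form `ω^a{}_c ∧ ω^{cb}`. -/
noncomputable def connectionProduct (ω : Fin 4 → Fin 4 → Fin 4 → ℝ) (μ ν a b : Fin 4) : ℝ :=
  ∑ c, (∑ k, ω μ a k * eta k c) * ω ν c b

/-- The coefficient of `dt ∧ dr ∧ dθ ∧ dφ` in `-(1/2) ω^a{}_c ∧ ω^{cb} ∧ S_{ab}` at a point where
the vierbein has components `E a μ` and the connection has components `ω μ a b`. -/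
noncomputable def hamiltonianDensity (E : Fin 4 → Fin 4 → ℝ)
    (ω : Fin 4 → Fin 4 → Fin 4 → ℝ) : ℝ :=
  -(1 / 4 : ℝ) * ∑ τ : Equiv.Perm (Fin 4), ((Equiv.Perm.sign τ : ℤ) : ℝ) *
    ∑ a : Fin 4, ∑ b : Fin 4, ∑ c : Fin 4, ∑ d : Fin 4, ∑ e : Fin 4,
      (∑ k : Fin 4, ω (τ 0) a k * eta k c) * ω (τ 1) c b * eps a b d e * E d (τ 2) * E e (τ 3)

/-- The contraction `η_cc ω_μ^{μc} ω_ν^{νc}` (summed over `c` only): up to sign, the only part of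
`connectionProduct` that survives for a connection with `ω_μ^{ab} = 0` unless `μ ∈ {a, b}`. -/
noncomputable def alignedProduct (ω : Fin 4 → Fin 4 → Fin 4 → ℝ) (μ ν : Fin 4) : ℝ :=
  ∑ c, eta c c * ω μ μ c * ω ν ν c

theorem sum_mul_eta (v : Fin 4 → ℝ) (c : Fin 4) : ∑ k, v k * eta k c = v c * eta c c := by
  simp [eta]

theorem eps_map_perm (τ : Equiv.Perm (Fin 4)) (a b c d : Fin 4) :
    eps (τ a) (τ b) (τ c) (τ d) = ((Equiv.Perm.sign τ : ℤ) : ℝ) * eps a b c d := by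
  have comp_eq : ![τ a, τ b, τ c, τ d] = τ ∘ ![a, b, c, d] := by
    ext i; fin_cases i <;> rfl
  have matches_iff (σ : Equiv.Perm (Fin 4)) :
      ![τ a, τ b, τ c, τ d] = ⇑(τ * σ) ↔ ![a, b, c, d] = ⇑σ := by
    rw [comp_eq, Equiv.Perm.coe_mul]
    exact τ.injective.comp_left.eq_iff
  rw [eps, eps, ← Equiv.sum_comp (Equiv.mulLeft τ), Finset.mul_sum]
  refine Finset.sum_congr rfl fun σ _ => ?_
  simp only [Equiv.coe_mulLeft, matches_iff, map_mul, Units.val_mul, Int.cast_mul,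
    mul_ite, mul_zero]

theorem eps_two_three (a b : Fin 4) :
    eps a b 2 3 = (if a = 0 ∧ b = 1 then 1 else 0) - (if a = 1 ∧ b = 0 then 1 else 0) := by
  have integral_identity : ∀ a b : Fin 4,
      (∑ σ : Equiv.Perm (Fin 4), if ![a, b, 2, 3] = ⇑σ then (Equiv.Perm.sign σ : ℤ) else 0) =
        (if a = 0 ∧ b = 1 then 1 else 0) - (if a = 1 ∧ b = 0 then 1 else 0) := by
    decide
  have real_identity := congrArg (Int.cast : ℤ → ℝ) (integral_identity a b)
  push_cast at real_identity
  exact real_identity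

theorem eps_apply_two_three (τ : Equiv.Perm (Fin 4)) (a b : Fin 4) :
    eps a b (τ 2) (τ 3) = ((Equiv.Perm.sign τ : ℤ) : ℝ) *
      ((if a = τ 0 ∧ b = τ 1 then 1 else 0) - (if a = τ 1 ∧ b = τ 0 then 1 else 0)) := by
  obtain ⟨a, rfl⟩ := τ.surjective a
  obtain ⟨b, rfl⟩ := τ.surjective b
  simp only [eps_map_perm, eps_two_three, τ.injective.eq_iff]

theorem sum_mul_eps_apply_two_three (τ : Equiv.Perm (Fin 4)) (F : Fin 4 → Fin 4 → ℝ) :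
    ∑ a, ∑ b, F a b * eps a b (τ 2) (τ 3) =
      ((Equiv.Perm.sign τ : ℤ) : ℝ) * (F (τ 0) (τ 1) - F (τ 1) (τ 0)) := by
  simp only [eps_apply_two_three, mul_left_comm (F _ _), ← Finset.mul_sum]
  simp [mul_sub, ite_and]

section PermSum

variable {M : Type*} [AddCommMonoid M]

theorem sum_perm_fin_four (F : Fin 4 → Fin 4 → Fin 4 → Fin 4 → M) :
    ∑ τ : Equiv.Perm (Fin 4), F (τ 0) (τ 1) (τ 2) (τ 3) =
      (F 0 1 2 3 + F 0 1 3 2 + F 0 2 1 3 + F 0 2 3 1 + F 0 3 1 2 + F 0 3 2 1) +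
      (F 1 0 2 3 + F 1 0 3 2 + F 1 2 0 3 + F 1 2 3 0 + F 1 3 0 2 + F 1 3 2 0) +
      (F 2 0 1 3 + F 2 0 3 1 + F 2 1 0 3 + F 2 1 3 0 + F 2 3 0 1 + F 2 3 1 0) +
      (F 3 0 1 2 + F 3 0 2 1 + F 3 1 0 2 + F 3 1 2 0 + F 3 2 0 1 + F 3 2 1 0) := by
  have swaps_bijective : Function.Bijective fun p : Fin 4 × Fin 3 × Fin 2 =>
      Equiv.swap 0 p.1 * Equiv.swap 1 p.2.1.succ * Equiv.swap 2 p.2.2.succ.succ := by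
    decide
  rw [← swaps_bijective.sum_comp]
  simp only [Fintype.sum_prod_type, Fin.sum_univ_succ, Finset.univ_unique, Fin.default_eq_zero,
    Finset.sum_singleton, Equiv.Perm.coe_mul, Function.comp_apply, Equiv.swap_apply_def,
    Fin.reduceSucc, Fin.reduceEq, Fin.isValue, reduceIte]
  abel

theorem sum_perm_fin_four_of_symm {F : Fin 4 → Fin 4 → Fin 4 → Fin 4 → M}
    (symm_left : ∀ i j k l, F i j k l = F j i k l)
    (symm_right : ∀ i j k l, F i j k l = F i j l k) :
    ∑ τ : Equiv.Perm (Fin 4), F (τ 0) (τ 1) (τ 2) (τ 3) =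
      4 • (F 0 1 2 3 + F 0 2 1 3 + F 0 3 1 2 + F 1 2 0 3 + F 1 3 0 2 + F 2 3 0 1) := by
  simp only [sum_perm_fin_four, symm_left 1 0, symm_left 2 0, symm_left 3 0, symm_left 2 1,
    symm_left 3 1, symm_left 3 2, symm_right _ _ 1 0, symm_right _ _ 2 0, symm_right _ _ 3 0,
    symm_right _ _ 2 1, symm_right _ _ 3 1, symm_right _ _ 3 2]
  abel

end PermSum

theorem sum_mul_mul_of_diagonal {ι R : Type*} [Fintype ι] [NonUnitalNonAssocSemiring R]
    {E : ι → ι → R} (hE : ∀ a μ, a ≠ μ → E a μ = 0) (F : ι → ι → R) (ρ σ : ι) :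
    ∑ d, ∑ e, F d e * E d ρ * E e σ = F ρ σ * E ρ ρ * E σ σ := by
  rw [Fintype.sum_eq_single ρ fun d hd => by simp [hE d ρ hd],
    Fintype.sum_eq_single σ fun e he => by simp [hE e σ he]]

section DiagonalVierbein

variable {E : Fin 4 → Fin 4 → ℝ} {ω : Fin 4 → Fin 4 → Fin 4 → ℝ}

theorem sum_connection_eps_vierbein_of_diagonal (hE : ∀ a μ, a ≠ μ → E a μ = 0)
    (τ : Equiv.Perm (Fin 4)) :
    ∑ a, ∑ b, ∑ c, ∑ d, ∑ e,
      (∑ k, ω (τ 0) a k * eta k c) * ω (τ 1) c b * eps a b d e * E d (τ 2) * E e (τ 3) =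
    ((Equiv.Perm.sign τ : ℤ) : ℝ) *
      (connectionProduct ω (τ 0) (τ 1) (τ 0) (τ 1) -
        connectionProduct ω (τ 0) (τ 1) (τ 1) (τ 0)) * E (τ 2) (τ 2) * E (τ 3) (τ 3) := by
  rw [← sum_mul_eps_apply_two_three τ (connectionProduct ω (τ 0) (τ 1))]
  have contract_vierbein (a b c : Fin 4) := sum_mul_mul_of_diagonal hE
    (fun d e => (∑ k, ω (τ 0) a k * eta k c) * ω (τ 1) c b * eps a b d e) (τ 2) (τ 3)
  simp only [contract_vierbein]
  simp only [connectionProduct, Finset.sum_mul]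

theorem hamiltonianDensity_of_diagonal (hE : ∀ a μ, a ≠ μ → E a μ = 0) :
    hamiltonianDensity E ω = -(1 / 4 : ℝ) * ∑ τ : Equiv.Perm (Fin 4),
      (connectionProduct ω (τ 0) (τ 1) (τ 0) (τ 1) -
        connectionProduct ω (τ 0) (τ 1) (τ 1) (τ 0)) * E (τ 2) (τ 2) * E (τ 3) (τ 3) := by
  have sign_mul_sign (τ : Equiv.Perm (Fin 4)) :
      ((Equiv.Perm.sign τ : ℤ) : ℝ) * ((Equiv.Perm.sign τ : ℤ) : ℝ) = 1 := by
    exact_mod_cast Int.units_coe_mul_self (Equiv.Perm.sign τ)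
  simp only [hamiltonianDensity, sum_connection_eps_vierbein_of_diagonal hE, ← mul_assoc,
    sign_mul_sign, one_mul]

theorem alignedProduct_comm (μ ν : Fin 4) : alignedProduct ω μ ν = alignedProduct ω ν μ :=
  Finset.sum_congr rfl fun _ _ => mul_right_comm _ _ _

theorem connectionProduct_self_self (skew : ∀ μ a b, ω μ a b = -ω μ b a) (μ ν : Fin 4) :
    connectionProduct ω μ ν μ ν = -alignedProduct ω μ ν := by
  simp only [connectionProduct, alignedProduct, sum_mul_eta, ← Finset.sum_neg_distrib]
  exact Finset.sum_congr rfl fun c _ => by rw [skew ν c ν]; ring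

theorem connectionProduct_swap_eq_zero (skew : ∀ μ a b, ω μ a b = -ω μ b a)
    (aligned : ∀ μ a b, a ≠ μ → b ≠ μ → ω μ a b = 0) {μ ν : Fin 4} (hμν : μ ≠ ν) :
    connectionProduct ω μ ν ν μ = 0 := by
  simp only [connectionProduct, sum_mul_eta]
  refine Finset.sum_eq_zero fun c _ => ?_
  rcases eq_or_ne c μ with rfl | hc
  · rw [self_eq_neg.1 (skew ν c c), mul_zero]
  · rw [aligned μ ν c hμν.symm hc, zero_mul, zero_mul]

theorem hamiltonianDensity_of_diagonal_of_aligned (hE : ∀ a μ, a ≠ μ → E a μ = 0)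
    (skew : ∀ μ a b, ω μ a b = -ω μ b a)
    (aligned : ∀ μ a b, a ≠ μ → b ≠ μ → ω μ a b = 0) :
    hamiltonianDensity E ω =
      alignedProduct ω 0 1 * E 2 2 * E 3 3 + alignedProduct ω 0 2 * E 1 1 * E 3 3 +
      alignedProduct ω 0 3 * E 1 1 * E 2 2 + alignedProduct ω 1 2 * E 0 0 * E 3 3 +
      alignedProduct ω 1 3 * E 0 0 * E 2 2 + alignedProduct ω 2 3 * E 0 0 * E 1 1 := by
  have swap_eq_zero (τ : Equiv.Perm (Fin 4)) :
      connectionProduct ω (τ 0) (τ 1) (τ 1) (τ 0) = 0 :=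
    connectionProduct_swap_eq_zero skew aligned (τ.injective.ne (by decide))
  have sum_eq := sum_perm_fin_four_of_symm
    (F := fun μ ν ρ σ => alignedProduct ω μ ν * E ρ ρ * E σ σ)
    (fun μ ν ρ σ => by simp only [alignedProduct_comm μ ν]) (fun _ _ _ _ => mul_right_comm _ _ _)
  simp only [hamiltonianDensity_of_diagonal hE, swap_eq_zero, connectionProduct_self_self skew,
    sub_zero, neg_mul, Finset.sum_neg_distrib, sum_eq]
  ring

end DiagonalVierbein

section Schwarzschild

variable {G m : ℝ} {x : Fin 4 → ℝ}

theorem fS_pos (hf : 2 * G * m / x 1 < 1) : 0 < fS G m x :=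
  Real.sqrt_pos.2 (sub_pos.2 hf)

theorem fS_sq (hf : 2 * G * m / x 1 ≤ 1) : fS G m x ^ 2 = 1 - 2 * G * m / x 1 :=
  Real.sq_sqrt (sub_nonneg.2 hf)

theorem Evb_eq_zero_of_ne (a μ : Fin 4) (h : a ≠ μ) : Evb G m x a μ = 0 := by
  fin_cases a <;> fin_cases μ <;> first | rfl | exact absurd rfl h

theorem sw_skew (μ a b : Fin 4) : sw G m x μ a b = -sw G m x μ b a := by
  fin_cases μ <;> fin_cases a <;> fin_cases b <;> simp [sw, neg_div]

theorem sw_eq_zero_of_ne_of_ne (μ a b : Fin 4) (ha : a ≠ μ) (hb : b ≠ μ) : sw G m x μ a b = 0 := by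
  fin_cases μ <;> fin_cases a <;> fin_cases b <;>
    first | rfl | exact absurd rfl ha | exact absurd rfl hb

theorem alignedProduct_sw_r_left (ν : Fin 4) : alignedProduct (sw G m x) 1 ν = 0 := by
  simp [alignedProduct, Fin.sum_univ_four, sw]

theorem alignedProduct_sw_t_θ :
    alignedProduct (sw G m x) 0 2 = -(G * m / x 1 ^ 2 * fS G m x) := by
  simp [alignedProduct, Fin.sum_univ_four, sw, eta, neg_div]

theorem alignedProduct_sw_t_φ :
    alignedProduct (sw G m x) 0 3 = -(G * m / x 1 ^ 2 * (fS G m x * Real.sin (x 2))) := by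
  simp [alignedProduct, Fin.sum_univ_four, sw, eta, neg_div]

theorem alignedProduct_sw_θ_φ :
    alignedProduct (sw G m x) 2 3 = -(fS G m x ^ 2 * Real.sin (x 2)) := by
  simp [alignedProduct, Fin.sum_univ_four, sw, eta, sq, mul_assoc]

theorem hamiltonianDensity_schwarzschild (hr : x 1 ≠ 0) (hf : fS G m x ≠ 0) :
    hamiltonianDensity (Evb G m x) (sw G m x) =
      -(fS G m x ^ 2 + 2 * G * m / x 1) * Real.sin (x 2) := by
  rw [hamiltonianDensity_of_diagonal_of_aligned Evb_eq_zero_of_ne sw_skew sw_eq_zero_of_ne_of_ne,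
    alignedProduct_comm 0 1, alignedProduct_sw_r_left, alignedProduct_sw_r_left,
    alignedProduct_sw_r_left, alignedProduct_sw_t_θ, alignedProduct_sw_t_φ, alignedProduct_sw_θ_φ]
  simp only [Evb, Matrix.cons_val]
  field_simp
  ring

theorem schwarzschild_hamiltonian_density_general (hr : x 1 ≠ 0) (hf : 2 * G * m / x 1 < 1) :
    hamiltonianDensity (Evb G m x) (sw G m x) = -Real.sin (x 2) := by
  rw [hamiltonianDensity_schwarzschild hr (fS_pos hf).ne', fS_sq hf.le]
  ring

end Schwarzschild

/-- for the Schwarzschild data, the Hamiltonian four-form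
−(1/2) Σ ω^a{}_c ∧ ω^{cb} ∧ S_{ab} equals −sin θ · dt∧dr∧dθ∧dφ on U,
expressed via its single coefficient. -/
theorem schwarzschild_hamiltonian_density (G m : ℝ) (hG : 0 < G) (hm : 0 ≤ m)
    (x : Fin 4 → ℝ) (hx : x ∈ Uchart G m) :
    -(1 / 4 : ℝ) * ∑ τ : Equiv.Perm (Fin 4), ((Equiv.Perm.sign τ : ℤ) : ℝ) *
      ∑ a : Fin 4, ∑ b : Fin 4, ∑ c : Fin 4, ∑ d : Fin 4, ∑ e : Fin 4,
        swl G m x (τ 0) a c * sw G m x (τ 1) c b * eps a b d e *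
          Evb G m x d (τ 2) * Evb G m x e (τ 3)
      = -Real.sin (x 2) := by
  exact schwarzschild_hamiltonian_density_general hx.2.1.ne' ((div_lt_one hx.2.1).2 hx.1)
end
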